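/- Fix m ≥ 1 and let c = c_{m−1} c_{m−2} … c_0 be an ST-admissible word of length m over Fin 4, with position i counted from the right and lexicographic comparison of words performed on positions m−1, m−2, … (leftmost most significant) in the level order 0 < 1 < 2 < 3. Let g(c) be the number of ST-admissible words of length m that are lexicographically smaller than c. For each i define y_{i,1},…,y_{i,5} ∈ {0,1} as follows, where a condition referring to a position ≥ m is false, except that conditions of the form 'c_{i+2} ≠ 0' are regarded as true when position i+2 does not exist: y_{i,1} = 1 iff (i = m−1 and c_i = 1) or (c_{i+1},c_i) = (0,2) or (c_{i+1},c_i) = (2,2); y_{i,2} = 1 iff (i = m−1 and c_i = 2) or (c_{i+1},c_i) = (0,3); y_{i,3} = 1 iff i = m−1 and c_i = 3; y_{i,4} = 1 iff (c_{i+1},c_i) = (1,3), or (c_{i+2},c_{i+1},c_i) = (0,3,3), or ((c_{i+1},c_i) = (3,1) and c_{i+2} ≠ 0); y_{i,5} = 1 iff (c_{i+1},c_i) = (3,3) and c_{i+2} ≠ 0. Set θ_{i,1} = y_{i,1} + y_{i,3} + y_{i,4}, θ_{i,2} = y_{i,2} + y_{i,3} + y_{i,5}, θ_{i,3} = y_{i,1}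 + y_{i,2} + y_{i,3}. Then, as an identity of rational numbers, g(c) = Σ_{i=0}^{m−1} [ (θ_{i,1}/2 + θ_{i,2})·N4(i) + (θ_{i,3}/2)·N4(i−1) ]. -/

import Mathlib

namespace STLOCO

/-- Forbidden 2-tuples of `ST⁴`, read left-to-right. -/
def STpair (a b : Fin 4) : Prop :=
  (a = 0 ∧ b = 1) ∨ (a = 1 ∧ b = 0) ∨ (a = 1 ∧ b = 2) ∨
  (a = 2 ∧ b = 1) ∨ (a = 2 ∧ b = 3) ∨ (a = 3 ∧ b = 2)

/-- Forbidden 3-tuples of `ST⁴`, read left-to-right. -/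
def STtriple (a x b : Fin 4) : Prop :=
  (a = 0 ∧ x = 3 ∧ b = 0) ∨ (a = 3 ∧ x = 0 ∧ b = 3)

instance (a b : Fin 4) : Decidable (STpair a b) := by unfold STpair; infer_instance
instance (a x b : Fin 4) : Decidable (STtriple a x b) := by unfold STtriple; infer_instance

/-- Right-indexed ST-admissibility: `c i` is the symbol at position `i` counted from the
right (`c (m−1)` is the leftmost symbol), and forbidden patterns are read left-to-right,
i.e. from higher positions towards lower positions. -/
def STadmR {m : ℕ} (c : Fin m → Fin 4) : Prop :=
  (∀ i j : Fin m, (i : ℕ) = (j : ℕ) + 1 → ¬ STpair (c i) (c j)) ∧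
  (∀ i j k : Fin m, (i : ℕ) = (k : ℕ) + 2 → (j : ℕ) = (k : ℕ) + 1 →
    ¬ STtriple (c i) (c j) (c k))

instance {m : ℕ} : DecidablePred (@STadmR m) := fun c => by
  unfold STadmR; infer_instance

/-- Number of ST-admissible words of length `m`, with the convention `N4 0 = 2`. -/
def N4 (m : ℕ) : ℕ :=
  if m = 0 then 2
  else (Finset.univ.filter (fun w : Fin m → Fin 4 => STadmR w)).card

/-- `N4 (i − 1)` with the convention `N4 (−1) = 0`. -/
def N4pred : ℕ → ℕ
  | 0 => 0
  | k + 1 => N4 k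

/-- Lexicographic order on right-indexed words: the leftmost (highest-index) position
is the most significant, and symbols are compared in the level order `0 < 1 < 2 < 3`. -/
def lexLt {m : ℕ} (u v : Fin m → Fin 4) : Prop :=
  ∃ i : Fin m, u i < v i ∧ ∀ j : Fin m, i < j → u j = v j

instance {m : ℕ} (u v : Fin m → Fin 4) : Decidable (lexLt u v) := by
  unfold lexLt; infer_instance

/-- The lexicographic index of `c`: the number of ST-admissible words of length `m`
that are lexicographically smaller than `c`. -/
def gIndex {m : ℕ} (c : Fin m → Fin 4) : ℕ :=
  (Finset.univ.filter (fun w : Fin m → Fin 4 => STadmR w ∧ lexLt w c)).card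

/-- The symbol at (right-counted) position `k`, or `none` if `k ≥ m`. -/
def copt {m : ℕ} (c : Fin m → Fin 4) (k : ℕ) : Option (Fin 4) :=
  if h : k < m then some (c ⟨k, h⟩) else none

/-- Merging variable `y_{i,1}`. -/
def y1 {m : ℕ} (c : Fin m → Fin 4) (i : Fin m) : ℕ :=
  if ((i : ℕ) + 1 = m ∧ c i = 1) ∨ (copt c ((i : ℕ) + 1) = some 0 ∧ c i = 2) ∨
      (copt c ((i : ℕ) + 1) = some 2 ∧ c i = 2) then 1 else 0

/-- Merging variable `y_{i,2}`. -/
def y2 {m : ℕ} (c : Fin m → Fin 4) (i : Fin m) : ℕ :=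
  if ((i : ℕ) + 1 = m ∧ c i = 2) ∨ (copt c ((i : ℕ) + 1) = some 0 ∧ c i = 3) then 1 else 0

/-- Merging variable `y_{i,3}`. -/
def y3 {m : ℕ} (c : Fin m → Fin 4) (i : Fin m) : ℕ :=
  if (i : ℕ) + 1 = m ∧ c i = 3 then 1 else 0

/-- Merging variable `y_{i,4}`; a condition `c_{i+2} ≠ 0` is regarded as true when
position `i+2` does not exist. -/
def y4 {m : ℕ} (c : Fin m → Fin 4) (i : Fin m) : ℕ :=
  if (copt c ((i : ℕ) + 1) = some 1 ∧ c i = 3) ∨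
      (copt c ((i : ℕ) + 2) = some 0 ∧ copt c ((i : ℕ) + 1) = some 3 ∧ c i = 3) ∨
      (copt c ((i : ℕ) + 1) = some 3 ∧ c i = 1 ∧ copt c ((i : ℕ) + 2) ≠ some 0)
    then 1 else 0

/-- Merging variable `y_{i,5}`; the condition `c_{i+2} ≠ 0` is regarded as true when
position `i+2` does not exist. -/
def y5 {m : ℕ} (c : Fin m → Fin 4) (i : Fin m) : ℕ :=
  if copt c ((i : ℕ) + 1) = some 3 ∧ c i = 3 ∧ copt c ((i : ℕ) + 2) ≠ some 0
    then 1 else 0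

def stTheta1 {m : ℕ} (c : Fin m → Fin 4) (i : Fin m) : ℕ := y1 c i + y3 c i + y4 c i
def stTheta2 {m : ℕ} (c : Fin m → Fin 4) (i : Fin m) : ℕ := y2 c i + y3 c i + y5 c i
def stTheta3 {m : ℕ} (c : Fin m → Fin 4) (i : Fin m) : ℕ := y1 c i + y2 c i + y3 c i

def ctxOk (p q : Option (Fin 4)) (a : Fin 4) : Prop :=
  (∀ x : Fin 4, q = some x → ¬ STpair x a) ∧
  (∀ x y : Fin 4, p = some x → q = some y → ¬ STtriple x y a)

instance (p q : Option (Fin 4)) (a : Fin 4) : Decidable (ctxOk p q a) := by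
  unfold ctxOk; infer_instance

def cx (p q : Option (Fin 4)) {k : ℕ} (w : Fin k → Fin 4) (j : ℕ) : Option (Fin 4) :=
  if h : j < k then some (w ⟨j, h⟩) else if j = k then q else if j = k + 1 then p else none

def AdmC (p q : Option (Fin 4)) {k : ℕ} (w : Fin k → Fin 4) : Prop :=
  ∀ i : Fin k, ctxOk (cx p q w (i + 2)) (cx p q w (i + 1)) (w i)

instance (p q : Option (Fin 4)) {k : ℕ} (w : Fin k → Fin 4) : Decidable (AdmC p q w) := by
  unfold AdmC; infer_instance

lemma cx_none {k : ℕ} (w : Fin k → Fin 4) (j : ℕ) : cx none none w j = copt w j := by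
  unfold cx copt; split_ifs <;> rfl

lemma cx_snoc (p q : Option (Fin 4)) {k : ℕ} (w : Fin k → Fin 4) (a : Fin 4) (j : ℕ)
    (hj : j ≤ k + 1) :
    cx p q (Fin.snoc w a : Fin (k + 1) → Fin 4) j = cx q (some a) w j := by
  unfold cx
  by_cases h : j < k
  · have h' : j < k + 1 := by omega
    simp [h, h', Fin.snoc]
  · by_cases h2 : j = k
    · subst h2; simp [Fin.snoc]
    · have h3 : j = k + 1 := by omega
      subst h3; simp

lemma adm_snoc (p q : Option (Fin 4)) {k : ℕ} (w : Fin k → Fin 4) (a : Fin 4) :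
    AdmC p q (Fin.snoc w a : Fin (k + 1) → Fin 4) ↔ ctxOk p q a ∧ AdmC q (some a) w := by
  unfold AdmC
  rw [Fin.forall_fin_succ']
  rw [and_comm]
  apply and_congr
  · simp [cx]
  · apply forall_congr'
    intro i
    have := i.2
    rw [cx_snoc _ _ _ _ _ (by simp), cx_snoc _ _ _ _ _ (by simp <;> omega)]
    simp

lemma lex_snoc {k : ℕ} (w c : Fin k → Fin 4) (a b : Fin 4) :
    lexLt (Fin.snoc w a : Fin (k + 1) → Fin 4) (Fin.snoc c b) ↔ a < b ∨ (a = b ∧ lexLt w c) := by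
  unfold lexLt
  rw [Fin.exists_fin_succ', or_comm]
  apply or_congr
  · simp [Fin.forall_fin_succ', Fin.le_last, Fin.not_lt.2 (Fin.le_last _)]
  · simp only [Fin.forall_fin_succ', Fin.snoc_castSucc, Fin.snoc_last, Fin.castSucc_lt_castSucc_iff,
      Fin.castSucc_lt_last, forall_true_left]
    constructor
    · rintro ⟨i, h1, h2, h3⟩; exact ⟨h3, i, h1, h2⟩
    · rintro ⟨h3, i, h1, h2⟩; exact ⟨i, h1, h2, h3⟩

lemma adm_iff {m : ℕ} (w : Fin m → Fin 4) : STadmR w ↔ AdmC none none w := by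
  unfold STadmR AdmC ctxOk
  simp only [cx_none, copt]
  constructor
  · rintro ⟨h1, h2⟩ i
    refine ⟨?_, ?_⟩
    · intro x hx
      split_ifs at hx with h
      simp only [Option.some.injEq] at hx
      subst hx
      exact h1 _ _ rfl
    · intro x y hx hy
      split_ifs at hx hy with h h'
      simp only [Option.some.injEq] at hx hy
      subst hx hy
      exact h2 _ _ _ rfl rfl
  · intro h
    refine ⟨?_, ?_⟩
    · rintro ⟨i, hi⟩ j hij
      simp only at hij
      subst hij
      exact (h j).1 _ (by rw [dif_pos hi])
    · rintro ⟨i, hi⟩ ⟨j, hj⟩ k hik hjk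
      simp only at hik hjk
      subst hik hjk
      exact (h k).2 _ _ (by rw [dif_pos hi]) (by rw [dif_pos hj])

def cntF (k : ℕ) (p q : Option (Fin 4)) : ℕ :=
  ∑ w : Fin k → Fin 4, if AdmC p q w then 1 else 0

def cntG {k : ℕ} (p q : Option (Fin 4)) (c : Fin k → Fin 4) : ℕ :=
  ∑ w : Fin k → Fin 4, if AdmC p q w ∧ lexLt w c then 1 else 0

lemma sum_snoc {k : ℕ} (f : (Fin (k + 1) → Fin 4) → ℕ) :
    ∑ w, f w = ∑ a : Fin 4, ∑ w : Fin k → Fin 4, f (Fin.snoc w a) := by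
  rw [← Fintype.sum_prod_type' (f := fun a w => f (Fin.snoc w a))]
  exact (Fintype.sum_equiv (Fin.snocEquiv (fun _ => Fin 4)) _ _ (fun x => rfl)).symm

lemma cntF_zero (p q : Option (Fin 4)) : cntF 0 p q = 1 := by
  simp [cntF, AdmC]

lemma cntF_succ (k : ℕ) (p q : Option (Fin 4)) :
    cntF (k + 1) p q = ∑ a : Fin 4, if ctxOk p q a then cntF k q (some a) else 0 := by
  unfold cntF
  rw [sum_snoc]
  refine Finset.sum_congr rfl fun a _ => ?_
  simp only [adm_snoc]
  by_cases h : ctxOk p q a <;> simp [h]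

lemma cntG_snoc (k : ℕ) (p q : Option (Fin 4)) (c : Fin k → Fin 4) (b : Fin 4)
    (hb : ctxOk p q b) :
    cntG p q (Fin.snoc c b : Fin (k + 1) → Fin 4) =
      (∑ a : Fin 4, if a < b ∧ ctxOk p q a then cntF k q (some a) else 0) +
        cntG q (some b) c := by
  have h1 : cntG q (some b) c = ∑ a : Fin 4, if a = b then cntG q (some a) c else 0 := by
    simp
  rw [h1, ← Finset.sum_add_distrib]
  unfold cntG cntF
  rw [sum_snoc]
  refine Finset.sum_congr rfl fun a _ => ?_
  simp only [adm_snoc, lex_snoc]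
  rcases lt_trichotomy a b with h | h | h
  · by_cases h' : ctxOk p q a <;> simp [h, h.ne, h']
  · subst h; simp [hb]
  · simp [h.ne', h.not_gt]

/-- pair (a_k, b_k) -/
def ab : ℕ → ℕ × ℕ
  | 0 => (1, 1)
  | k + 1 => ((ab k).1 + 2 * (ab k).2, (ab k).1 + (ab k).2)

def special (p : Option (Fin 4)) (x : Fin 4) : Prop :=
  (x = 0 ∧ p = some 3) ∨ (x = 3 ∧ p = some 0) ∨ x = 1 ∨ x = 2

instance (p : Option (Fin 4)) (x : Fin 4) : Decidable (special p x) := by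
  unfold special; infer_instance

lemma cntF_eq (k : ℕ) (p : Option (Fin 4)) (x : Fin 4) :
    cntF k p (some x) = if special p x then (ab k).2 else (ab k).1 := by
  induction k generalizing p x with
  | zero => simp [cntF_zero, ab]
  | succ k ih =>
    rw [cntF_succ]
    simp only [ih, ab]
    generalize (ab k).1 = u
    generalize (ab k).2 = v
    rw [Fin.sum_univ_four]
    rcases p with _ | p
    · fin_cases x <;> simp [ctxOk, special, STpair, STtriple] <;> ring
    · fin_cases p <;> fin_cases x <;> simp [ctxOk, special, STpair, STtriple] <;> ring

lemma N4_eq (k : ℕ) : N4 k = 2 * (ab k).2 := by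
  rcases k with _ | k
  · simp [N4, ab]
  · have : N4 (k + 1) = cntF (k + 1) none none := by
      simp only [N4, cntF, adm_iff, Finset.card_filter]; simp
    rw [this, cntF_succ]
    simp only [cntF_eq, ab, Fin.sum_univ_four]
    simp [ctxOk, special]; ring

lemma N4pred_eq (k : ℕ) : N4 k + N4pred k = 2 * (ab k).1 := by
  rcases k with _ | k
  · simp [N4, N4pred, ab]
  · simp only [N4pred, N4_eq, ab]; ring

def z1 (q : Option (Fin 4)) (a : Fin 4) : ℕ :=
  if (q = none ∧ a = 1) ∨ (q = some 0 ∧ a = 2) ∨ (q = some 2 ∧ a = 2) then 1 else 0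
def z2 (q : Option (Fin 4)) (a : Fin 4) : ℕ :=
  if (q = none ∧ a = 2) ∨ (q = some 0 ∧ a = 3) then 1 else 0
def z3 (q : Option (Fin 4)) (a : Fin 4) : ℕ :=
  if q = none ∧ a = 3 then 1 else 0
def z4 (p q : Option (Fin 4)) (a : Fin 4) : ℕ :=
  if (q = some 1 ∧ a = 3) ∨ (p = some 0 ∧ q = some 3 ∧ a = 3) ∨
    (q = some 3 ∧ a = 1 ∧ p ≠ some 0) then 1 else 0
def z5 (p q : Option (Fin 4)) (a : Fin 4) : ℕ :=
  if q = some 3 ∧ a = 3 ∧ p ≠ some 0 then 1 else 0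

def term (p q : Option (Fin 4)) (a : Fin 4) (i : ℕ) : ℚ :=
  (((z1 q a + z3 q a + z4 p q a : ℕ) : ℚ) / 2 + ((z2 q a + z3 q a + z5 p q a : ℕ) : ℚ)) * (N4 i : ℚ)
    + ((z1 q a + z2 q a + z3 q a : ℕ) : ℚ) / 2 * (N4pred i : ℚ)

lemma term_eq (k : ℕ) (p q : Option (Fin 4)) (b : Fin 4) (hb : ctxOk p q b) :
    ((∑ a : Fin 4, if a < b ∧ ctxOk p q a then cntF k q (some a) else 0 : ℕ) : ℚ) =
      term p q b k := by
  have hv : (N4 k : ℚ) = 2 * ((ab k).2 : ℚ) := by exact_mod_cast N4_eq k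
  have hu : (N4pred k : ℚ) = 2 * ((ab k).1 : ℚ) - 2 * ((ab k).2 : ℚ) := by
    rw [← hv, eq_sub_iff_add_eq, add_comm]; exact_mod_cast N4pred_eq k
  simp only [cntF_eq, term, hv, hu]
  generalize (ab k).1 = u
  generalize (ab k).2 = v
  rw [Fin.sum_univ_four]
  revert hb
  rcases q with _ | q
  · fin_cases b <;> simp [ctxOk, special, z1, z2, z3, z4, z5] <;> ring
  · rcases p with _ | p
    · fin_cases q <;> fin_cases b <;>
        simp [ctxOk, special, STpair, STtriple, z1, z2, z3, z4, z5] <;> ring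
    · fin_cases p <;> fin_cases q <;> fin_cases b <;>
        simp [ctxOk, special, STpair, STtriple, z1, z2, z3, z4, z5] <;> ring

lemma main_rec (k : ℕ) (p q : Option (Fin 4)) (c : Fin k → Fin 4) (hc : AdmC p q c) :
    (cntG p q c : ℚ) = ∑ i : Fin k, term (cx p q c (i + 2)) (cx p q c (i + 1)) (c i) i := by
  induction k generalizing p q with
  | zero => simp [cntG, lexLt]
  | succ k ih =>
    obtain ⟨d, b, rfl⟩ : ∃ (d : Fin k → Fin 4) (b : Fin 4), c = Fin.snoc d b :=
      ⟨Fin.init c, c (Fin.last k), (Fin.snoc_init_self c).symm⟩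
    rw [adm_snoc] at hc
    rw [cntG_snoc _ _ _ _ _ hc.1, Nat.cast_add, term_eq _ _ _ _ hc.1, ih _ _ _ hc.2,
      Fin.sum_univ_castSucc, add_comm]
    congr 1
    · refine Finset.sum_congr rfl fun i _ => ?_
      have := i.2
      rw [cx_snoc _ _ _ _ _ (by simp <;> omega), cx_snoc _ _ _ _ _ (by simp <;> omega)]
      simp
    · simp [cx]

theorem st_encoding_decoding_rule (m : ℕ) (hm : 1 ≤ m) (c : Fin m → Fin 4)
    (hc : STadmR c) :
    (gIndex c : ℚ) =
      ∑ i : Fin m,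
        (((stTheta1 c i : ℚ) / 2 + (stTheta2 c i : ℚ)) * (N4 (i : ℕ) : ℚ) +
          (stTheta3 c i : ℚ) / 2 * (N4pred (i : ℕ) : ℚ)) := by
  have hG : gIndex c = cntG none none c := by
    simp only [gIndex, cntG, adm_iff, Finset.card_filter]
  rw [hG, main_rec m none none c ((adm_iff c).1 hc)]
  refine Finset.sum_congr rfl fun i _ => ?_
  have hq : ((i : ℕ) + 1 = m) ↔ copt c ((i : ℕ) + 1) = none := by
    have := i.2
    simp [copt]; omega
  simp only [cx_none, term, stTheta1, stTheta2, stTheta3, y1, y2, y3, y4, y5, z1, z2, z3, z4, z5,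
    hq]

end STLOCO
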